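/- (Pessimism.) Consider any δ ∈ (0,1) and suppose the constant c_b > 0 in the Q-EarlySettled-Advantage algorithm is sufficiently large. Then with probability at least 1 − δ, the iterates of the algorithm satisfy Q_h^{LCB,k}(s,a) ≤ Q_h^*(s,a) and V_h^{LCB,k}(s) ≤ V_h^*(s) simultaneously for all (s, a, k, h) ∈ S × A × [K] × [H]. -/

import Mathlib

open MeasureTheory Finset

/-- A finite-horizon MDP with horizon `H`, non-stationary transition kernels `P h s a ·`,
and deterministic rewards `r h s a ∈ [0,1]`. -/
structure MDP (S A : Type) [Fintype S] [Fintype A] where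
  H : ℕ
  P : ℕ → S → A → S → ℝ
  r : ℕ → S → A → ℝ
  H_pos : 1 ≤ H
  P_nonneg : ∀ h s a s', 0 ≤ P h s a s'
  P_sum_one : ∀ h s a, ∑ s', P h s a s' = 1
  r_nonneg : ∀ h s a, 0 ≤ r h s a
  r_le_one : ∀ h s a, r h s a ≤ 1

namespace MDP

variable {S A : Type} [Fintype S] [Fintype A] [Nonempty S] [Nonempty A]

/-- Optimal Q-function, defined by backward induction on the remaining number of steps
(`Qstar` below instantiates the fuel as `H + 1 - h`, so that values at step `H + 1`
vanish and the Bellman optimality equation holds for `1 ≤ h ≤ H`). -/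
noncomputable def QstarAux (M : MDP S A) : ℕ → ℕ → S → A → ℝ
  | 0, _, _, _ => 0
  | (fuel + 1), h, s, a =>
      M.r h s a + ∑ s' : S, M.P h s a s' *
        (Finset.univ.sup' Finset.univ_nonempty fun a' => QstarAux M fuel (h + 1) s' a')

/-- The optimal Q-function `Q_h^⋆`. -/
noncomputable def Qstar (M : MDP S A) (h : ℕ) (s : S) (a : A) : ℝ :=
  QstarAux M (M.H + 1 - h) h s a

/-- The optimal value function `V_h^⋆`. -/
noncomputable def Vstar (M : MDP S A) (h : ℕ) (s : S) : ℝ :=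
  Finset.univ.sup' Finset.univ_nonempty fun a => M.Qstar h s a

/-- Value function `V_h^π` of a deterministic policy `π`, by backward induction. -/
noncomputable def VpolAux (M : MDP S A) (π : ℕ → S → A) : ℕ → ℕ → S → ℝ
  | 0, _, _ => 0
  | (fuel + 1), h, s =>
      M.r h s (π h s) + ∑ s' : S, M.P h s (π h s) s' * VpolAux M π fuel (h + 1) s'

/-- The value function `V_h^π` of a deterministic policy `π`. -/
noncomputable def Vpol (M : MDP S A) (π : ℕ → S → A) (h : ℕ) (s : S) : ℝ :=
  VpolAux M π (M.H + 1 - h) h s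

/-- Conditional variance `Var_{h,s,a}(V) = P_{h,s,a}(V²) - (P_{h,s,a} V)²`. -/
noncomputable def varP (M : MDP S A) (h : ℕ) (s : S) (a : A) (V : S → ℝ) : ℝ :=
  (∑ s' : S, M.P h s a s' * (V s') ^ 2) - (∑ s' : S, M.P h s a s' * V s') ^ 2

end MDP

/-- The Q-learning rate `η_n = (H+1)/(H+n)`. -/
noncomputable def lr (H n : ℕ) : ℝ := (H + 1 : ℝ) / (H + n)

/-- `η_n^N`: equal to `η_n ∏_{i=n+1}^N (1 - η_i)` for `1 ≤ n ≤ N` (hence `η_n` for `N = n`),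
`0` for `N < n`, and `η_0^N = ∏_{i=1}^N (1 - η_i)` (which is `1` if `N = 0` and `0` otherwise,
since `1 - η_1 = 0`). -/
noncomputable def lrProd (H n N : ℕ) : ℝ :=
  if N < n then 0
  else (if n = 0 then 1 else lr H n) * ∏ i ∈ Finset.Icc (n + 1) N, (1 - lr H i)

/-- The log factor `log(SAT/δ)` with `T = KH`. -/
noncomputable def iota (S A : Type) [Fintype S] [Fintype A] (K H : ℕ) (δ : ℝ) : ℝ :=
  Real.log ((Fintype.card S : ℝ) * (Fintype.card A) * (K * H) / δ)

/-- The trajectory `(s_h^k, a_h^k)` is generated by online interaction with the MDP `M`: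
states and actions are adapted to the filtration `𝓕` (with time index `(k-1)H + h`
corresponding to step `h` of episode `k`), and conditionally on the history,
`s_{h+1}^k ∼ P_h(· | s_h^k, a_h^k)`. -/
def IsMDPTrajectory {S A : Type} [Fintype S] [Fintype A] [DecidableEq S]
    [MeasurableSpace S] [MeasurableSpace A]
    {Ω : Type} [m0 : MeasurableSpace Ω] (μ : Measure Ω)
    (M : MDP S A) (K : ℕ) (𝓕 : Filtration ℕ m0)
    (st : ℕ → ℕ → Ω → S) (ac : ℕ → ℕ → Ω → A) : Prop :=
  (∀ k ∈ Finset.Icc 1 K, ∀ h ∈ Finset.Icc 1 (M.H + 1),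
      Measurable[𝓕 ((k - 1) * M.H + h)] (st k h)) ∧
  (∀ k ∈ Finset.Icc 1 K, ∀ h ∈ Finset.Icc 1 M.H,
      Measurable[𝓕 ((k - 1) * M.H + h)] (ac k h)) ∧
  (∀ k ∈ Finset.Icc 1 K, ∀ h ∈ Finset.Icc 1 M.H, ∀ s' : S,
      μ[(fun ω => if st k (h + 1) ω = s' then (1 : ℝ) else 0) | 𝓕 ((k - 1) * M.H + h)]
        =ᵐ[μ] fun ω => M.P h (st k h ω) (ac k h ω) s')

/-- The **Q-EarlySettled-Advantage** algorithm (Algorithms 1–2 of the paper), run for `K`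
episodes on the MDP `M` with bonus constant `cb` and failure probability `δ`.
The fields record the trajectory `(s_h^k, a_h^k)`, the greedy policies `π^k`, the visit
counters, all Q/value estimates and auxiliary statistics, together with the initialization
and update equations defining the algorithm.  A quantity carrying episode index `k`
denotes its value at the *beginning* of episode `k` (`N k` is the counter at the *end*
of episode `k`, with `N 0 = 0`); `kvis n h s a` is the episode of the `n`-th visit of
`(s,a)` at step `h`. -/
structure QLAlg {S A : Type} [Fintype S] [Fintype A] [Nonempty S] [Nonempty A]
    [DecidableEq S] [DecidableEq A] (M : MDP S A) (K : ℕ) (cb δ : ℝ) where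
  /-- `s_h^k` : the state visited at step `h` of episode `k` -/
  st : ℕ → ℕ → S
  /-- `a_h^k` : the action taken at step `h` of episode `k` -/
  ac : ℕ → ℕ → A
  /-- `π^k` : the greedy policy executed during episode `k` -/
  pol : ℕ → ℕ → S → A
  /-- `N_h^k(s,a)` : number of visits of `(s,a)` at step `h` by the end of episode `k` -/
  N : ℕ → ℕ → S → A → ℕ
  /-- the combined Q-estimate `Q_h^k` -/
  Q : ℕ → ℕ → S → A → ℝ
  /-- the Hoeffding-bonus optimistic estimate `Q_h^{UCB,k}` -/
  QUCB : ℕ → ℕ → S → A → ℝ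
  /-- the pessimistic estimate `Q_h^{LCB,k}` -/
  QLCB : ℕ → ℕ → S → A → ℝ
  /-- the reference-advantage estimate `Q_h^{R,k}` -/
  QR : ℕ → ℕ → S → A → ℝ
  /-- `V_h^k` -/
  V : ℕ → ℕ → S → ℝ
  /-- `V_h^{LCB,k}` -/
  VLCB : ℕ → ℕ → S → ℝ
  /-- the reference value `V_h^{R,k}` -/
  VR : ℕ → ℕ → S → ℝ
  /-- the flag `u_ref^k` governing the final reference update -/
  uref : ℕ → ℕ → S → Prop
  /-- running mean `μ_h^{ref,k}` of the reference -/
  muRef : ℕ → ℕ → S → A → ℝ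
  /-- running second moment `σ_h^{ref,k}` of the reference -/
  sigRef : ℕ → ℕ → S → A → ℝ
  /-- running weighted mean `μ_h^{adv,k}` of the advantage -/
  muAdv : ℕ → ℕ → S → A → ℝ
  /-- running weighted second moment `σ_h^{adv,k}` of the advantage -/
  sigAdv : ℕ → ℕ → S → A → ℝ
  /-- the aggregated bonus `B_h^{R,k}` -/
  BR : ℕ → ℕ → S → A → ℝ
  /-- the bonus difference `δ_h^{R,k}` -/
  dR : ℕ → ℕ → S → A → ℝ
  /-- `bR k h` : the exploration bonus `b_h^R` computed at step `h` of episode `k` -/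
  bR : ℕ → ℕ → ℝ
  /-- `kvis n h s a = k_h^n(s,a)` : the episode of the `n`-th visit of `(s,a)` at step `h` -/
  kvis : ℕ → ℕ → S → A → ℕ
  greedy : ∀ k h s a, Q k h s a ≤ Q k h s (pol k h s)
  act_eq : ∀ k h, ac k h = pol k h (st k h)
  N_init : ∀ h s a, N 0 h s a = 0
  N_upd : ∀ k ∈ Icc 1 K, ∀ h ∈ Icc 1 M.H, ∀ s a,
    N k h s a = N (k - 1) h s a + (if s = st k h ∧ a = ac k h then 1 else 0)
  Q_init : ∀ h ∈ Icc 1 M.H, ∀ s a, Q 1 h s a = M.H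
  QUCB_init : ∀ h ∈ Icc 1 M.H, ∀ s a, QUCB 1 h s a = M.H
  QR_init : ∀ h ∈ Icc 1 M.H, ∀ s a, QR 1 h s a = M.H
  QLCB_init : ∀ h ∈ Icc 1 M.H, ∀ s a, QLCB 1 h s a = 0
  V_init : ∀ h ∈ Icc 1 M.H, ∀ s, V 1 h s = M.H
  VR_init : ∀ h ∈ Icc 1 M.H, ∀ s, VR 1 h s = M.H
  VLCB_init : ∀ h ∈ Icc 1 M.H, ∀ s, VLCB 1 h s = 0
  uref_init : ∀ h s, uref 1 h s
  mom_init : ∀ h s a, muRef 1 h s a = 0 ∧ sigRef 1 h s a = 0 ∧ muAdv 1 h s a = 0 ∧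
    sigAdv 1 h s a = 0 ∧ BR 1 h s a = 0 ∧ dR 1 h s a = 0
  V_terminal : ∀ k s, V k (M.H + 1) s = 0 ∧ VR k (M.H + 1) s = 0 ∧ VLCB k (M.H + 1) s = 0
  QUCB_upd : ∀ k ∈ Icc 1 K, ∀ h ∈ Icc 1 M.H, ∀ s a,
    QUCB (k + 1) h s a =
      if s = st k h ∧ a = ac k h then
        (1 - lr M.H (N k h s a)) * QUCB k h s a
          + lr M.H (N k h s a) *
            (M.r h s a + V k (h + 1) (st k (h + 1))
              + cb * Real.sqrt ((M.H : ℝ) ^ 3 * iota S A K M.H δ / (N k h s a)))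
      else QUCB k h s a
  QLCB_upd : ∀ k ∈ Icc 1 K, ∀ h ∈ Icc 1 M.H, ∀ s a,
    QLCB (k + 1) h s a =
      if s = st k h ∧ a = ac k h then
        (1 - lr M.H (N k h s a)) * QLCB k h s a
          + lr M.H (N k h s a) *
            (M.r h s a + VLCB k (h + 1) (st k (h + 1))
              - cb * Real.sqrt ((M.H : ℝ) ^ 3 * iota S A K M.H δ / (N k h s a)))
      else QLCB k h s a
  muRef_upd : ∀ k ∈ Icc 1 K, ∀ h ∈ Icc 1 M.H, ∀ s a,
    muRef (k + 1) h s a =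
      if s = st k h ∧ a = ac k h then
        (1 - 1 / (N k h s a : ℝ)) * muRef k h s a
          + (1 / (N k h s a : ℝ)) * VR k (h + 1) (st k (h + 1))
      else muRef k h s a
  sigRef_upd : ∀ k ∈ Icc 1 K, ∀ h ∈ Icc 1 M.H, ∀ s a,
    sigRef (k + 1) h s a =
      if s = st k h ∧ a = ac k h then
        (1 - 1 / (N k h s a : ℝ)) * sigRef k h s a
          + (1 / (N k h s a : ℝ)) * (VR k (h + 1) (st k (h + 1))) ^ 2
      else sigRef k h s a
  muAdv_upd : ∀ k ∈ Icc 1 K, ∀ h ∈ Icc 1 M.H, ∀ s a,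
    muAdv (k + 1) h s a =
      if s = st k h ∧ a = ac k h then
        (1 - lr M.H (N k h s a)) * muAdv k h s a
          + lr M.H (N k h s a) * (V k (h + 1) (st k (h + 1)) - VR k (h + 1) (st k (h + 1)))
      else muAdv k h s a
  sigAdv_upd : ∀ k ∈ Icc 1 K, ∀ h ∈ Icc 1 M.H, ∀ s a,
    sigAdv (k + 1) h s a =
      if s = st k h ∧ a = ac k h then
        (1 - lr M.H (N k h s a)) * sigAdv k h s a
          + lr M.H (N k h s a) *
              (V k (h + 1) (st k (h + 1)) - VR k (h + 1) (st k (h + 1))) ^ 2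
      else sigAdv k h s a
  BR_upd : ∀ k ∈ Icc 1 K, ∀ h ∈ Icc 1 M.H, ∀ s a,
    BR (k + 1) h s a =
      if s = st k h ∧ a = ac k h then
        cb * Real.sqrt (iota S A K M.H δ / (N k h s a)) *
          (Real.sqrt (sigRef (k + 1) h s a - (muRef (k + 1) h s a) ^ 2)
            + Real.sqrt (M.H) * Real.sqrt (sigAdv (k + 1) h s a - (muAdv (k + 1) h s a) ^ 2))
      else BR k h s a
  dR_upd : ∀ k ∈ Icc 1 K, ∀ h ∈ Icc 1 M.H, ∀ s a,
    dR (k + 1) h s a =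
      if s = st k h ∧ a = ac k h then BR (k + 1) h s a - BR k h s a else dR k h s a
  bR_def : ∀ k ∈ Icc 1 K, ∀ h ∈ Icc 1 M.H,
    bR k h = BR (k + 1) h (st k h) (ac k h)
      + (1 - lr M.H (N k h (st k h) (ac k h))) * dR (k + 1) h (st k h) (ac k h)
          / lr M.H (N k h (st k h) (ac k h))
      + cb * (M.H : ℝ) ^ 2 * iota S A K M.H δ
          / (N k h (st k h) (ac k h) : ℝ) ^ ((3 : ℝ) / 4)
  QR_upd : ∀ k ∈ Icc 1 K, ∀ h ∈ Icc 1 M.H, ∀ s a,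
    QR (k + 1) h s a =
      if s = st k h ∧ a = ac k h then
        (1 - lr M.H (N k h s a)) * QR k h s a
          + lr M.H (N k h s a) *
            (M.r h s a + V k (h + 1) (st k (h + 1)) - VR k (h + 1) (st k (h + 1))
              + muRef (k + 1) h s a + bR k h)
      else QR k h s a
  Q_upd : ∀ k ∈ Icc 1 K, ∀ h ∈ Icc 1 M.H, ∀ s a,
    Q (k + 1) h s a =
      if s = st k h ∧ a = ac k h then
        min (QR (k + 1) h s a) (min (QUCB (k + 1) h s a) (Q k h s a))
      else Q k h s a
  V_upd : ∀ k ∈ Icc 1 K, ∀ h ∈ Icc 1 M.H, ∀ s,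
    V (k + 1) h s =
      if s = st k h then Finset.univ.sup' Finset.univ_nonempty (fun a => Q (k + 1) h s a)
      else V k h s
  VLCB_upd : ∀ k ∈ Icc 1 K, ∀ h ∈ Icc 1 M.H, ∀ s,
    VLCB (k + 1) h s =
      if s = st k h then
        max (Finset.univ.sup' Finset.univ_nonempty (fun a => QLCB (k + 1) h s a)) (VLCB k h s)
      else VLCB k h s
  VR_upd_pos : ∀ k ∈ Icc 1 K, ∀ h ∈ Icc 1 M.H,
    (1 < V (k + 1) h (st k h) - VLCB (k + 1) h (st k h) ∨ uref k h (st k h)) →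
      VR (k + 1) h (st k h) = V (k + 1) h (st k h)
  VR_upd_neg : ∀ k ∈ Icc 1 K, ∀ h ∈ Icc 1 M.H,
    ¬(1 < V (k + 1) h (st k h) - VLCB (k + 1) h (st k h) ∨ uref k h (st k h)) →
      VR (k + 1) h (st k h) = VR k h (st k h)
  VR_upd_other : ∀ k ∈ Icc 1 K, ∀ h ∈ Icc 1 M.H, ∀ s, s ≠ st k h →
    VR (k + 1) h s = VR k h s
  uref_upd_pos : ∀ k ∈ Icc 1 K, ∀ h ∈ Icc 1 M.H,
    1 < V (k + 1) h (st k h) - VLCB (k + 1) h (st k h) → uref (k + 1) h (st k h)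
  uref_upd_neg : ∀ k ∈ Icc 1 K, ∀ h ∈ Icc 1 M.H,
    ¬(1 < V (k + 1) h (st k h) - VLCB (k + 1) h (st k h)) → ¬uref (k + 1) h (st k h)
  uref_upd_other : ∀ k ∈ Icc 1 K, ∀ h ∈ Icc 1 M.H, ∀ s, s ≠ st k h →
    (uref (k + 1) h s ↔ uref k h s)
  kvis_spec : ∀ h ∈ Icc 1 M.H, ∀ s a n, 1 ≤ n → n ≤ N K h s a →
    kvis n h s a ∈ Icc 1 K ∧ N (kvis n h s a) h s a = n ∧
      st (kvis n h s a) h = s ∧ ac (kvis n h s a) h = a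

/-! ### Helper lemmas -/

namespace PessAux

set_option linter.unusedSectionVars false

lemma hoeffding_fin {S : Type} [Fintype S] (p Y : S → ℝ) (B t : ℝ) (hB : 0 < B)
    (hp : ∀ s, 0 ≤ p s) (hp1 : ∑ s, p s = 1) (hY : ∀ s, |Y s| ≤ B)
    (hmean : ∑ s, p s * Y s = 0) :
    ∑ s, Real.exp (t * Y s - t ^ 2 * B ^ 2 / 2) * p s ≤ 1 := by
  have key : ∀ s, Real.exp (t * Y s) ≤ Real.cosh (t * B) + Y s / B * Real.sinh (t * B) := by
    intro s
    have h1 := abs_le.mp (hY s)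
    have hw1 : 0 ≤ (B + Y s) / (2 * B) := by apply div_nonneg <;> linarith
    have hw2 : 0 ≤ (B - Y s) / (2 * B) := by apply div_nonneg <;> linarith
    have hw3 : (B + Y s) / (2 * B) + (B - Y s) / (2 * B) = 1 := by field_simp; ring
    have hc := convexOn_exp.2 (Set.mem_univ (t * B)) (Set.mem_univ (-(t * B))) hw1 hw2 hw3
    have e1 : ((B + Y s) / (2 * B)) • (t * B) + ((B - Y s) / (2 * B)) • (-(t * B)) = t * Y s := by
      simp only [smul_eq_mul]; field_simp; ring
    rw [e1] at hc
    refine hc.trans (le_of_eq ?_)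
    rw [Real.cosh_eq, Real.sinh_eq]
    simp only [smul_eq_mul]; field_simp; ring
  have hsum : ∑ s, Real.exp (t * Y s) * p s ≤ Real.cosh (t * B) := by
    calc ∑ s, Real.exp (t * Y s) * p s
        ≤ ∑ s, (Real.cosh (t * B) + Y s / B * Real.sinh (t * B)) * p s :=
          Finset.sum_le_sum fun s _ => mul_le_mul_of_nonneg_right (key s) (hp s)
      _ = Real.cosh (t * B) * ∑ s, p s + Real.sinh (t * B) / B * ∑ s, p s * Y s := by
          rw [Finset.mul_sum, Finset.mul_sum, ← Finset.sum_add_distrib]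
          refine Finset.sum_congr rfl fun s _ => ?_
          ring
      _ = Real.cosh (t * B) := by rw [hp1, hmean]; ring
  have h2 : Real.cosh (t * B) ≤ Real.exp (t ^ 2 * B ^ 2 / 2) := by
    have := Real.cosh_le_exp_half_sq (t * B)
    rwa [mul_pow] at this
  calc ∑ s, Real.exp (t * Y s - t ^ 2 * B ^ 2 / 2) * p s
      = (Real.exp (t ^ 2 * B ^ 2 / 2))⁻¹ * ∑ s, Real.exp (t * Y s) * p s := by
        rw [Finset.mul_sum]
        refine Finset.sum_congr rfl fun s _ => ?_
        rw [Real.exp_sub]; field_simp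
    _ ≤ (Real.exp (t ^ 2 * B ^ 2 / 2))⁻¹ * Real.exp (t ^ 2 * B ^ 2 / 2) := by
        apply mul_le_mul_of_nonneg_left (hsum.trans h2); positivity
    _ = 1 := inv_mul_cancel₀ (Real.exp_pos _).ne'

/-! learning rates -/

lemma lr_nonneg (H n : ℕ) : 0 ≤ lr H n := by unfold lr; positivity

lemma lr_le_one (H n : ℕ) (hn : 1 ≤ n) : lr H n ≤ 1 := by
  unfold lr
  have : (1 : ℝ) ≤ n := by exact_mod_cast hn
  rw [div_le_one (by positivity)]; linarith

lemma lr_one (H : ℕ) : lr H 1 = 1 := by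
  unfold lr; push_cast; exact div_self (by positivity)

lemma lrProd_mem (H n N : ℕ) : 0 ≤ lrProd H n N ∧ lrProd H n N ≤ 1 := by
  unfold lrProd
  split_ifs with h1 h2
  · simp
  · have h0 : ∀ i ∈ Icc (n + 1) N, 0 ≤ 1 - lr H i := fun i hi => by
      have := lr_le_one H i (by have := (mem_Icc.mp hi).1; omega); linarith
    have h1 : ∀ i ∈ Icc (n + 1) N, 1 - lr H i ≤ 1 := fun i _ => by
      have := lr_nonneg H i; linarith
    rw [one_mul]
    exact ⟨prod_nonneg h0, prod_le_one h0 h1⟩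
  · have h0 : ∀ i ∈ Icc (n + 1) N, 0 ≤ 1 - lr H i := fun i hi => by
      have := lr_le_one H i (by have := (mem_Icc.mp hi).1; omega); linarith
    have h1 : ∀ i ∈ Icc (n + 1) N, 1 - lr H i ≤ 1 := fun i _ => by
      have := lr_nonneg H i; linarith
    exact ⟨mul_nonneg (lr_nonneg _ _) (prod_nonneg h0),
      mul_le_one₀ (lr_le_one H n (by omega)) (prod_nonneg h0) (prod_le_one h0 h1)⟩

lemma lrProd_gt (H n N : ℕ) (h : N < n) : lrProd H n N = 0 := by simp [lrProd, h]

lemma lrProd_self (H n : ℕ) (h : 1 ≤ n) : lrProd H n n = lr H n := by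
  have : n ≠ 0 := by omega
  simp [lrProd, this]

lemma lrProd_succ (H n N : ℕ) (h : n ≤ N) :
    lrProd H n (N + 1) = (1 - lr H (N + 1)) * lrProd H n N := by
  unfold lrProd
  rw [if_neg (show ¬ N + 1 < n by omega), if_neg (show ¬ N < n by omega), Finset.prod_Icc_succ_top (by omega)]
  ring

lemma sum_sq_le (H N : ℕ) (hH : 1 ≤ H) (hN : 1 ≤ N) :
    ∑ n ∈ Icc 1 N, (lrProd H n N) ^ 2 ≤ 2 * H / N := by
  have hH' : (1 : ℝ) ≤ H := by exact_mod_cast hH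
  induction N, hN using Nat.le_induction with
  | base =>
    simp [lrProd_self, lr_one]; linarith
  | succ N hN ih =>
    have hN' : (1 : ℝ) ≤ N := by exact_mod_cast hN
    rw [Finset.sum_Icc_succ_top (by omega), lrProd_self _ _ (by omega)]
    have e : ∑ n ∈ Icc 1 N, (lrProd H n (N + 1)) ^ 2
        = (1 - lr H (N + 1)) ^ 2 * ∑ n ∈ Icc 1 N, (lrProd H n N) ^ 2 := by
      rw [Finset.mul_sum]
      refine Finset.sum_congr rfl fun n hn => ?_
      rw [lrProd_succ _ _ _ (mem_Icc.mp hn).2]; ring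
    rw [e]
    have h1 := mul_le_mul_of_nonneg_left ih (sq_nonneg (1 - lr H (N + 1)))
    refine (add_le_add_left h1 _).trans ?_
    have e2 : 1 - lr H (N + 1) = N / (H + N + 1) := by
      unfold lr; push_cast; field_simp; ring
    have e3 : lr H (N + 1) = (H + 1) / (H + N + 1) := by
      unfold lr; push_cast; ring
    rw [e2, e3]
    have e4 : ((N : ℝ) / (H + N + 1)) ^ 2 * (2 * H / N) + ((H + 1) / (H + N + 1)) ^ 2
        = (2 * H * N + (H + 1) ^ 2) / (H + N + 1) ^ 2 := by
      field_simp
    rw [e4]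
    push_cast
    rw [div_le_div_iff₀ (by positivity) (by positivity)]
    nlinarith [mul_nonneg (sub_nonneg.mpr hH') (sub_nonneg.mpr hN'), mul_pos (lt_of_lt_of_le one_pos hH') (lt_of_lt_of_le one_pos hN'), sq_nonneg (H : ℝ), pow_pos (lt_of_lt_of_le one_pos hH') 3, mul_nonneg (mul_nonneg (sub_nonneg.mpr hH') (sub_nonneg.mpr hH')) (sub_nonneg.mpr hN')]

/-! visit counts -/

section count
variable {S A : Type} [DecidableEq S] [DecidableEq A]

/-- visit counter of `(s,a)` along state/action sequences. -/
def cnt (x : ℕ → S) (y : ℕ → A) (s : S) (a : A) (k : ℕ) : ℕ :=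
  ∑ j ∈ Icc 1 k, if s = x j ∧ a = y j then 1 else 0

/-- weight of episode `j` in the aggregated estimate after `N` visits. -/
noncomputable def cf (H N : ℕ) (x : ℕ → S) (y : ℕ → A) (s : S) (a : A) (j : ℕ) : ℝ :=
  if s = x j ∧ a = y j then lrProd H (cnt x y s a j) N else 0

lemma cnt_zero (x : ℕ → S) (y : ℕ → A) (s : S) (a : A) : cnt x y s a 0 = 0 := by
  simp [cnt]

lemma cnt_succ (x : ℕ → S) (y : ℕ → A) (s : S) (a : A) (k : ℕ) :
    cnt x y s a (k + 1) = cnt x y s a k + if s = x (k + 1) ∧ a = y (k + 1) then 1 else 0 := by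
  unfold cnt; rw [Finset.sum_Icc_succ_top (by omega)]

lemma cnt_mono (x : ℕ → S) (y : ℕ → A) (s : S) (a : A) : Monotone (cnt x y s a) :=
  monotone_nat_of_le_succ fun k => by rw [cnt_succ]; omega

lemma cnt_le (x : ℕ → S) (y : ℕ → A) (s : S) (a : A) (k : ℕ) : cnt x y s a k ≤ k := by
  induction k with
  | zero => simp [cnt_zero]
  | succ k ih => rw [cnt_succ]; split_ifs <;> omega

lemma cf_mem (H N : ℕ) (x : ℕ → S) (y : ℕ → A) (s : S) (a : A) (j : ℕ) :
    0 ≤ cf H N x y s a j ∧ cf H N x y s a j ≤ 1 := by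
  unfold cf; split_ifs
  · exact lrProd_mem _ _ _
  · simp

lemma sum_cf_sq (H N : ℕ) (x : ℕ → S) (y : ℕ → A) (s : S) (a : A) (k : ℕ) :
    ∑ j ∈ Icc 1 k, (cf H N x y s a j) ^ 2
      = ∑ n ∈ Icc 1 (cnt x y s a k), (lrProd H n N) ^ 2 := by
  induction k with
  | zero => simp [cnt_zero]
  | succ k ih =>
    rw [Finset.sum_Icc_succ_top (by omega), ih]
    by_cases h : s = x (k + 1) ∧ a = y (k + 1)
    · have hc := cnt_succ x y s a k
      rw [if_pos h] at hc
      rw [cf, if_pos h, hc, Finset.sum_Icc_succ_top (by omega)]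
    · have hc := cnt_succ x y s a k
      rw [if_neg h] at hc
      rw [cf, if_neg h, hc]; simp

lemma sum_cf_sq_le (H N : ℕ) (hH : 1 ≤ H) (hN : 1 ≤ N) (x : ℕ → S) (y : ℕ → A) (s : S) (a : A)
    (k : ℕ) : ∑ j ∈ Icc 1 k, (cf H N x y s a j) ^ 2 ≤ 2 * H / N := by
  rw [sum_cf_sq]
  refine le_trans ?_ (sum_sq_le H N hH hN)
  have : ∀ n ∈ Icc 1 (cnt x y s a k), n ∉ Icc 1 N → (lrProd H n N) ^ 2 = 0 := by
    intro n hn hn'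
    rw [lrProd_gt]; · simp
    simp only [mem_Icc] at hn hn'; omega
  calc ∑ n ∈ Icc 1 (cnt x y s a k), (lrProd H n N) ^ 2
      ≤ ∑ n ∈ Icc 1 (cnt x y s a k) ∩ Icc 1 N, (lrProd H n N) ^ 2 := by
        apply le_of_eq; symm
        apply Finset.sum_subset inter_subset_left
        intro n hn hn'
        apply this n hn
        intro h; exact hn' (mem_inter.mpr ⟨hn, h⟩)
    _ ≤ _ := Finset.sum_le_sum_of_subset_of_nonneg inter_subset_right fun _ _ _ => sq_nonneg _

lemma sum_cf_trunc (H : ℕ) (x : ℕ → S) (y : ℕ → A) (s : S) (a : A) (X : ℕ → ℝ) (k K : ℕ)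
    (hk : k ≤ K) :
    ∑ j ∈ Icc 1 K, cf H (cnt x y s a k) x y s a j * X j
      = ∑ j ∈ Icc 1 k, cf H (cnt x y s a k) x y s a j * X j := by
  symm
  apply Finset.sum_subset (Finset.Icc_subset_Icc_right hk)
  intro j hj hj'
  have hkj : k + 1 ≤ j := by simp only [mem_Icc] at hj hj'; omega
  unfold cf
  split_ifs with h
  · obtain ⟨i, rfl⟩ : ∃ i, j = i + 1 := ⟨j - 1, by omega⟩
    have h1 := cnt_succ x y s a i
    rw [if_pos h] at h1
    have h2 := cnt_mono x y s a (show k ≤ i by omega)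
    rw [lrProd_gt _ _ _ (by omega)]; simp
  · simp

end count

/-! optimal value functions -/

section opt
variable {S A : Type} [Fintype S] [Fintype A] [Nonempty S] [Nonempty A]

lemma QstarAux_mem (M : MDP S A) (fuel : ℕ) : ∀ h s a,
    0 ≤ M.QstarAux fuel h s a ∧ M.QstarAux fuel h s a ≤ fuel := by
  induction fuel with
  | zero => intro h s a; simp [MDP.QstarAux]
  | succ f ih =>
    intro h s a
    rw [MDP.QstarAux]
    have hv : ∀ s', 0 ≤ (Finset.univ.sup' Finset.univ_nonempty
        fun a' => M.QstarAux f (h + 1) s' a') ∧ (Finset.univ.sup' Finset.univ_nonempty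
        fun a' => M.QstarAux f (h + 1) s' a') ≤ f := by
      intro s'
      refine ⟨?_, Finset.sup'_le _ _ fun a' _ => (ih _ _ _).2⟩
      obtain ⟨a0⟩ := ‹Nonempty A›
      exact le_trans (ih (h + 1) s' a0).1
        (Finset.le_sup' (fun a' => M.QstarAux f (h + 1) s' a') (mem_univ a0))
    constructor
    · exact add_nonneg (M.r_nonneg _ _ _)
        (Finset.sum_nonneg fun s' _ => mul_nonneg (M.P_nonneg _ _ _ _) (hv s').1)
    · have : ∑ s' : S, M.P h s a s' * (Finset.univ.sup' Finset.univ_nonempty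
          fun a' => M.QstarAux f (h + 1) s' a') ≤ ∑ s' : S, M.P h s a s' * f :=
        Finset.sum_le_sum fun s' _ => mul_le_mul_of_nonneg_left (hv s').2 (M.P_nonneg _ _ _ _)
      rw [← Finset.sum_mul, M.P_sum_one] at this
      have := M.r_le_one h s a
      push_cast; linarith

lemma Qstar_le_Vstar (M : MDP S A) (h : ℕ) (s : S) (a : A) : M.Qstar h s a ≤ M.Vstar h s :=
  Finset.le_sup' (fun a' => M.Qstar h s a') (mem_univ a)

lemma Vstar_nonneg (M : MDP S A) (h : ℕ) (s : S) : 0 ≤ M.Vstar h s := by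
  obtain ⟨a0⟩ := ‹Nonempty A›
  exact le_trans (QstarAux_mem M _ _ _ _).1 (Qstar_le_Vstar M h s a0)

lemma Vstar_le (M : MDP S A) (h : ℕ) (hh : 1 ≤ h) (s : S) : M.Vstar h s ≤ M.H := by
  refine Finset.sup'_le _ _ fun a _ => (QstarAux_mem M _ _ _ _).2.trans ?_
  have : M.H + 1 - h ≤ M.H := by omega
  exact_mod_cast this

lemma bellman (M : MDP S A) (h : ℕ) (hh : h ≤ M.H) (s : S) (a : A) :
    M.Qstar h s a = M.r h s a + ∑ s', M.P h s a s' * M.Vstar (h + 1) s' := by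
  unfold MDP.Vstar MDP.Qstar
  have e : M.H + 1 - h = (M.H - h) + 1 := by omega
  have e' : M.H + 1 - (h + 1) = M.H - h := by omega
  rw [e, e', MDP.QstarAux]

/-- centred next-step value. -/
noncomputable def ctr (M : MDP S A) (h : ℕ) (s : S) (a : A) (s' : S) : ℝ :=
  M.Vstar (h + 1) s' - ∑ s'', M.P h s a s'' * M.Vstar (h + 1) s''

lemma ctr_abs (M : MDP S A) (h : ℕ) (s : S) (a : A) (s' : S) : |ctr M h s a s'| ≤ M.H := by
  have h1 := Vstar_nonneg M (h + 1) s'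
  have h2 := Vstar_le M (h + 1) (by omega) s'
  have h3 : 0 ≤ ∑ s'', M.P h s a s'' * M.Vstar (h + 1) s'' :=
    Finset.sum_nonneg fun s' _ => mul_nonneg (M.P_nonneg _ _ _ _) (Vstar_nonneg _ _ _)
  have h4 : ∑ s'', M.P h s a s'' * M.Vstar (h + 1) s'' ≤ ∑ s'', M.P h s a s'' * M.H :=
    Finset.sum_le_sum fun s' _ =>
      mul_le_mul_of_nonneg_left (Vstar_le M (h + 1) (by omega) _) (M.P_nonneg _ _ _ _)
  rw [← Finset.sum_mul, M.P_sum_one] at h4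
  unfold ctr
  rw [abs_le]; constructor <;> linarith

lemma ctr_mean (M : MDP S A) (h : ℕ) (s : S) (a : A) :
    ∑ s', M.P h s a s' * ctr M h s a s' = 0 := by
  unfold ctr
  simp only [mul_sub, Finset.sum_sub_distrib]
  rw [← Finset.sum_mul, M.P_sum_one]; ring

end opt

/-! deterministic part -/

section det
variable {S A : Type} [Fintype S] [Fintype A] [Nonempty S] [Nonempty A]
  [DecidableEq S] [DecidableEq A]

lemma N_eq_cnt {M : MDP S A} {K : ℕ} {cb δ : ℝ} (alg : QLAlg M K cb δ) (h : ℕ)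
    (hh : h ∈ Icc 1 M.H) (s : S) (a : A) (k : ℕ) (hk : k ≤ K) :
    alg.N k h s a = cnt (fun j => alg.st j h) (fun j => alg.ac j h) s a k := by
  induction k with
  | zero => rw [alg.N_init, cnt_zero]
  | succ k ih =>
    rw [alg.N_upd (k + 1) (by simp; omega) h hh s a, cnt_succ]
    simp only [Nat.add_sub_cancel]
    rw [ih (by omega)]

/-- the Hoeffding bonus. -/
noncomputable def bon (cb H ι : ℝ) (N : ℕ) : ℝ := cb * Real.sqrt (H ^ 3 * ι / N)

lemma bon_anti (cb H ι : ℝ) (hcb : 0 ≤ cb) (hH : 0 ≤ H) (hι : 0 ≤ ι) (N : ℕ) (hN : 1 ≤ N) :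
    bon cb H ι (N + 1) ≤ bon cb H ι N := by
  unfold bon
  have : (1 : ℝ) ≤ N := by exact_mod_cast hN
  apply mul_le_mul_of_nonneg_left _ hcb
  apply Real.sqrt_le_sqrt
  apply div_le_div_of_nonneg_left (by positivity) (by positivity)
  push_cast; linarith

lemma QLCB_decomp {M : MDP S A} {K : ℕ} {cb δ : ℝ} (alg : QLAlg M K cb δ) (h : ℕ)
    (hh : h ∈ Icc 1 M.H) (s : S) (a : A) (hcb : 0 ≤ cb) (hι : 0 ≤ iota S A K M.H δ)
    (hV : ∀ k ∈ Icc 1 K, ∀ s', alg.VLCB k (h + 1) s' ≤ M.Vstar (h + 1) s')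
    (k : ℕ) (hk : k ≤ K) :
    (cnt (fun j => alg.st j h) (fun j => alg.ac j h) s a k = 0 → alg.QLCB (k + 1) h s a = 0) ∧
    (1 ≤ cnt (fun j => alg.st j h) (fun j => alg.ac j h) s a k →
      alg.QLCB (k + 1) h s a ≤ M.Qstar h s a
        + ∑ j ∈ Icc 1 k, cf M.H (cnt (fun j => alg.st j h) (fun j => alg.ac j h) s a k)
            (fun j => alg.st j h) (fun j => alg.ac j h) s a j * ctr M h s a (alg.st j (h + 1))
        - bon cb M.H (iota S A K M.H δ)
            (cnt (fun j => alg.st j h) (fun j => alg.ac j h) s a k)) := by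
  set x := fun j => alg.st j h with hx
  set y := fun j => alg.ac j h with hy
  induction k with
  | zero =>
    rw [cnt_zero]
    exact ⟨fun _ => alg.QLCB_init h hh s a, fun h => by omega⟩
  | succ k ih =>
    obtain ⟨ih0, ih1⟩ := ih (by omega)
    have hk1 : k + 1 ∈ Icc 1 K := by simp; omega
    have hcs := cnt_succ x y s a k
    have hup := alg.QLCB_upd (k + 1) hk1 h hh s a
    rw [N_eq_cnt alg h hh s a (k + 1) hk] at hup
    change alg.QLCB (k + 1 + 1) h s a = if s = x (k + 1) ∧ a = y (k + 1) then
        (1 - lr M.H (cnt x y s a (k + 1))) * alg.QLCB (k + 1) h s a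
          + lr M.H (cnt x y s a (k + 1)) *
            (M.r h s a + alg.VLCB (k + 1) (h + 1) (alg.st (k + 1) (h + 1))
              - bon cb M.H (iota S A K M.H δ) (cnt x y s a (k + 1)))
        else alg.QLCB (k + 1) h s a at hup
    by_cases hv : s = x (k + 1) ∧ a = y (k + 1)
    · rw [if_pos hv] at hcs hup
      refine ⟨fun h => by omega, fun _ => ?_⟩
      rw [Finset.sum_Icc_succ_top (by omega)]
      have hc1 : cf M.H (cnt x y s a (k + 1)) x y s a (k + 1) = lr M.H (cnt x y s a (k + 1)) := by
        rw [cf, if_pos hv, lrProd_self _ _ (by omega)]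
      have hc2 : ∑ j ∈ Icc 1 k, cf M.H (cnt x y s a (k + 1)) x y s a j
            * ctr M h s a (alg.st j (h + 1))
          = (1 - lr M.H (cnt x y s a (k + 1))) * ∑ j ∈ Icc 1 k, cf M.H (cnt x y s a k) x y s a j
            * ctr M h s a (alg.st j (h + 1)) := by
        rw [Finset.mul_sum]
        refine Finset.sum_congr rfl fun j hj => ?_
        unfold cf
        split_ifs with hj'
        · rw [hcs, lrProd_succ _ _ _ (cnt_mono x y s a (mem_Icc.mp hj).2)]; ring
        · ring
      rw [hc1, hc2, hup]
      have hV' := hV (k + 1) hk1 (alg.st (k + 1) (h + 1))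
      have hb := bellman M h (mem_Icc.mp hh).2 s a
      have hr : M.r h s a + alg.VLCB (k + 1) (h + 1) (alg.st (k + 1) (h + 1))
          ≤ M.Qstar h s a + ctr M h s a (alg.st (k + 1) (h + 1)) := by
        rw [hb, ctr]; linarith
      have hl0 := lr_nonneg M.H (cnt x y s a (k + 1))
      have hl1 := lr_le_one M.H (cnt x y s a (k + 1)) (by omega)
      rcases Nat.eq_zero_or_pos (cnt x y s a k) with h0 | hpos
      · rw [hcs, h0, zero_add, lr_one]
        linarith
      · have i1 := mul_le_mul_of_nonneg_left (ih1 hpos) (sub_nonneg.mpr hl1)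
        have i2 := mul_le_mul_of_nonneg_left hr hl0
        have i3 := mul_le_mul_of_nonneg_left
          (bon_anti cb M.H (iota S A K M.H δ) hcb (by positivity) hι _ hpos) (sub_nonneg.mpr hl1)
        rw [← hcs] at i3
        nlinarith [i1, i2, i3]
    · rw [if_neg hv] at hcs hup
      rw [add_zero] at hcs
      rw [hup, hcs, Finset.sum_Icc_succ_top (by omega)]
      have : cf M.H (cnt x y s a k) x y s a (k + 1) = 0 := by rw [cf, if_neg hv]
      rw [this, zero_mul, add_zero]
      exact ⟨ih0, ih1⟩

lemma VLCB_le {M : MDP S A} {K : ℕ} {cb δ : ℝ} (alg : QLAlg M K cb δ) (h : ℕ)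
    (hh : h ∈ Icc 1 M.H)
    (hQ : ∀ k ∈ Icc 1 K, ∀ s a, alg.QLCB k h s a ≤ M.Qstar h s a) :
    ∀ k ∈ Icc 1 K, ∀ s, alg.VLCB k h s ≤ M.Vstar h s := by
  intro k hk
  obtain ⟨hk1, hk2⟩ := mem_Icc.mp hk
  clear hk
  induction k, hk1 using Nat.le_induction with
  | base => intro s; rw [alg.VLCB_init h hh s]; exact Vstar_nonneg M h s
  | succ k hk1 ih =>
    intro s
    rw [alg.VLCB_upd k (by simp; omega) h hh s]
    split_ifs
    · refine max_le (Finset.sup'_le _ _ fun a _ => ?_) (ih (by omega) s)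
      exact (hQ (k + 1) (by simp; omega) s a).trans (Qstar_le_Vstar M h s a)
    · exact ih (by omega) s

lemma det_main {M : MDP S A} {K : ℕ} {cb δ : ℝ} (alg : QLAlg M K cb δ)
    (hcb : 0 ≤ cb) (hι : 0 ≤ iota S A K M.H δ)
    (hgood : ∀ s a, ∀ h ∈ Icc 1 M.H, ∀ N ∈ Icc 1 K,
      ∑ j ∈ Icc 1 K, cf M.H N (fun j => alg.st j h) (fun j => alg.ac j h) s a j
        * ctr M h s a (alg.st j (h + 1)) ≤ bon cb M.H (iota S A K M.H δ) N) :
    ∀ s a, ∀ k ∈ Icc 1 K, ∀ h ∈ Icc 1 M.H,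
      alg.QLCB k h s a ≤ M.Qstar h s a ∧ alg.VLCB k h s ≤ M.Vstar h s := by
  have hstep : ∀ h ∈ Icc 1 M.H,
      (∀ k ∈ Icc 1 K, ∀ s', alg.VLCB k (h + 1) s' ≤ M.Vstar (h + 1) s') →
      ∀ k ∈ Icc 1 K, ∀ s a, alg.QLCB k h s a ≤ M.Qstar h s a := by
    intro h hh hV k hk s a
    obtain ⟨hk1, hk2⟩ := mem_Icc.mp hk
    obtain ⟨i, rfl⟩ : ∃ i, k = i + 1 := ⟨k - 1, by omega⟩
    obtain ⟨d0, d1⟩ := QLCB_decomp alg h hh s a hcb hι hV i (by omega)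
    rcases Nat.eq_zero_or_pos (cnt (fun j => alg.st j h) (fun j => alg.ac j h) s a i) with h0 | hp
    · rw [d0 h0]; exact (QstarAux_mem M _ _ _ _).1
    · have h1 := d1 hp
      have hc := cnt_le (fun j => alg.st j h) (fun j => alg.ac j h) s a i
      have h2 := hgood s a h hh _ (mem_Icc.mpr ⟨hp, by omega⟩)
      rw [sum_cf_trunc _ _ _ _ _ _ i K (by omega)] at h2
      linarith
  have hVall : ∀ d, ∀ h, 1 ≤ h → h + d = M.H + 1 →
      ∀ k ∈ Icc 1 K, ∀ s', alg.VLCB k h s' ≤ M.Vstar h s' := by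
    intro d
    induction d with
    | zero =>
      intro h h1 h2 k hk s'
      obtain rfl : h = M.H + 1 := by omega
      rw [(alg.V_terminal k s').2.2]; exact Vstar_nonneg _ _ _
    | succ d ih =>
      intro h h1 h2
      have hh : h ∈ Icc 1 M.H := by simp; omega
      exact VLCB_le alg h hh (hstep h hh (ih (h + 1) (by omega) (by omega)))
  intro s a k hk h hh
  have hm := mem_Icc.mp hh
  exact ⟨hstep h hh (hVall (M.H - h) (h + 1) (by omega) (by omega)) k hk s a,
    hVall (M.H + 1 - h) h hm.1 (by omega) k hk s⟩

end det

/-! probabilistic part -/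

section prob

lemma cond_step {S Ω : Type} [Fintype S] [DecidableEq S] {m0 : MeasurableSpace Ω}
    (μ : Measure Ω) [IsProbabilityMeasure μ] (m : MeasurableSpace Ω) (hm : m ≤ m0)
    (Z : Ω → ℝ) (hZ : Measurable[m] Z) (hZ0 : ∀ ω, 0 ≤ Z ω) (C : ℝ) (hZC : ∀ ω, Z ω ≤ C)
    (Y : Ω → S) (hY : ∀ s', MeasurableSet[m0] {ω | Y ω = s'})
    (p : Ω → S → ℝ)
    (hp : ∀ s', μ[(fun ω => if Y ω = s' then (1 : ℝ) else 0) | m] =ᵐ[μ] fun ω => p ω s')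
    (g : S → Ω → ℝ) (hg : ∀ s', Measurable[m] (g s')) (C' : ℝ) (hgC : ∀ s' ω, |g s' ω| ≤ C')
    (hsum : ∀ ω, ∑ s', g s' ω * p ω s' ≤ 1) :
    ∫ ω, Z ω * g (Y ω) ω ∂μ ≤ ∫ ω, Z ω ∂μ := by
  have hZi : Integrable Z μ := by
    refine Integrable.of_bound (hZ.mono hm le_rfl).aestronglyMeasurable C
      (Filter.Eventually.of_forall fun ω => ?_)
    rw [Real.norm_eq_abs, abs_of_nonneg (hZ0 ω)]; exact hZC ω
  have hI : ∀ s', Integrable (fun ω => if Y ω = s' then (1 : ℝ) else 0) μ := by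
    intro s'
    refine Integrable.of_bound
      (Measurable.ite (hY s') measurable_const measurable_const).aestronglyMeasurable 1
      (Filter.Eventually.of_forall fun ω => ?_)
    split_ifs <;> simp
  have hZg : ∀ s', StronglyMeasurable[m] (fun ω => Z ω * g s' ω) := fun s' =>
    (hZ.mul (hg s')).stronglyMeasurable
  have hZgI : ∀ s', Integrable ((fun ω => Z ω * g s' ω) * (fun ω => if Y ω = s' then (1 : ℝ) else 0)) μ := by
    intro s'
    refine Integrable.of_bound ((((hZg s').mono hm).measurable).mul
      (Measurable.ite (hY s') measurable_const measurable_const)).aestronglyMeasurable (C * C')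
      (Filter.Eventually.of_forall fun ω => ?_)
    have hC : 0 ≤ C := (hZ0 ω).trans (hZC ω)
    have hC' : 0 ≤ C' := (abs_nonneg _).trans (hgC s' ω)
    simp only [Pi.mul_apply, Real.norm_eq_abs]
    split_ifs
    · rw [mul_one, abs_mul, abs_of_nonneg (hZ0 ω)]
      exact mul_le_mul (hZC ω) (hgC s' ω) (abs_nonneg _) hC
    · simp; positivity
  have hce : ∀ s', (fun ω => Z ω * g s' ω * p ω s') =ᵐ[μ]
      μ[(fun ω => Z ω * g s' ω) * (fun ω => if Y ω = s' then (1 : ℝ) else 0) | m] := by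
    intro s'
    have h1 := condExp_mul_of_stronglyMeasurable_left (hZg s') (hZgI s') (hI s')
    filter_upwards [h1, hp s'] with ω h1 h2
    rw [h1, Pi.mul_apply, h2]
  have hpI : ∀ s', Integrable (fun ω => Z ω * g s' ω * p ω s') μ := fun s' =>
    (integrable_congr (hce s')).mpr integrable_condExp
  calc ∫ ω, Z ω * g (Y ω) ω ∂μ
      = ∫ ω, ∑ s', ((fun ω => Z ω * g s' ω) * (fun ω => if Y ω = s' then (1 : ℝ) else 0)) ω ∂μ := by
        congr 1; ext ω; simp
    _ = ∑ s', ∫ ω, ((fun ω => Z ω * g s' ω) * (fun ω => if Y ω = s' then (1 : ℝ) else 0)) ω ∂μ :=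
        integral_finsetSum _ fun s' _ => hZgI s'
    _ = ∑ s', ∫ ω, Z ω * g s' ω * p ω s' ∂μ := by
        refine Finset.sum_congr rfl fun s' _ => ?_
        rw [integral_congr_ae (hce s'), integral_condExp hm]
    _ = ∫ ω, ∑ s', Z ω * g s' ω * p ω s' ∂μ := (integral_finsetSum _ fun s' _ => hpI s').symm
    _ ≤ ∫ ω, Z ω ∂μ := by
        refine integral_mono (integrable_finsetSum _ fun s' _ => hpI s') hZi fun ω => ?_
        have : ∑ s', Z ω * g s' ω * p ω s' = Z ω * ∑ s', g s' ω * p ω s' := by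
          rw [Finset.mul_sum]; exact Finset.sum_congr rfl fun _ _ => by ring
        show ∑ s', Z ω * g s' ω * p ω s' ≤ Z ω
        rw [this]
        exact mul_le_of_le_one_right (hZ0 ω) (hsum ω)

variable {S A Ω : Type} [DecidableEq S] [DecidableEq A]
    [MeasurableSpace S] [MeasurableSingletonClass S]
    [MeasurableSpace A] [MeasurableSingletonClass A]

lemma visit_meas {m : MeasurableSpace Ω} (x : Ω → S) (y : Ω → A) (hx : Measurable x)
    (hy : Measurable y) (s : S) (a : A) : MeasurableSet {ω | s = x ω ∧ a = y ω} := by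
  have h1 : MeasurableSet (x ⁻¹' {s}) := hx (measurableSet_singleton s)
  have h2 : MeasurableSet (y ⁻¹' {a}) := hy (measurableSet_singleton a)
  convert h1.inter h2 using 1
  ext ω; simp [eq_comm]

lemma cnt_meas {m : MeasurableSpace Ω} (x : ℕ → Ω → S) (y : ℕ → Ω → A) (s : S) (a : A) (k : ℕ)
    (hx : ∀ j ∈ Icc 1 k, Measurable (x j)) (hy : ∀ j ∈ Icc 1 k, Measurable (y j)) :
    Measurable fun ω => cnt (fun j => x j ω) (fun j => y j ω) s a k := by
  unfold cnt
  refine Finset.measurable_fun_sum _ fun j hj => ?_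
  exact Measurable.ite (visit_meas _ _ (hx j hj) (hy j hj) s a) measurable_const measurable_const

lemma cf_meas {m : MeasurableSpace Ω} (H N : ℕ) (x : ℕ → Ω → S) (y : ℕ → Ω → A) (s : S) (a : A)
    (k : ℕ) (hk : 1 ≤ k)
    (hx : ∀ j ∈ Icc 1 k, Measurable (x j)) (hy : ∀ j ∈ Icc 1 k, Measurable (y j)) :
    Measurable fun ω => cf H N (fun j => x j ω) (fun j => y j ω) s a k := by
  unfold cf
  have hkm : k ∈ Icc 1 k := by simp; omega
  refine Measurable.ite (visit_meas _ _ (hx k hkm) (hy k hkm) s a) ?_ measurable_const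
  exact (measurable_from_nat (f := fun n => lrProd H n N)).comp (cnt_meas x y s a k hx hy)

end prob

section prob2

variable {S A Ω : Type} [Fintype S] [Fintype A] [Nonempty S] [Nonempty A]
    [DecidableEq S] [DecidableEq A]
    [MeasurableSpace S] [MeasurableSingletonClass S]
    [MeasurableSpace A] [MeasurableSingletonClass A]

/-- one factor of the exponential supermartingale. -/
noncomputable def fac (M : MDP S A) (l : ℝ) (h : ℕ) (s : S) (a : A) (c : ℝ) (s' : S) : ℝ :=
  Real.exp (l * c * ctr M h s a s' - (l * c) ^ 2 * (M.H : ℝ) ^ 2 / 2)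

/-- the exponential supermartingale. -/
noncomputable def Zp (M : MDP S A) (l : ℝ) (h : ℕ) (s : S) (a : A) (N : ℕ)
    (st : ℕ → ℕ → Ω → S) (ac : ℕ → ℕ → Ω → A) (k : ℕ) (ω : Ω) : ℝ :=
  ∏ j ∈ Icc 1 k, fac M l h s a (cf M.H N (fun j => st j h ω) (fun j => ac j h ω) s a j)
    (st j (h + 1) ω)

lemma fac_pos (M : MDP S A) (l : ℝ) (h : ℕ) (s : S) (a : A) (c : ℝ) (s' : S) :
    0 < fac M l h s a c s' := Real.exp_pos _

lemma fac_le (M : MDP S A) (l : ℝ) (h : ℕ) (s : S) (a : A) (c : ℝ) (s' : S) (hc0 : 0 ≤ c)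
    (hc1 : c ≤ 1) : fac M l h s a c s' ≤ Real.exp (|l| * M.H) := by
  unfold fac
  apply Real.exp_le_exp.mpr
  have h1 : l * c * ctr M h s a s' ≤ |l| * M.H := by
    refine (le_abs_self _).trans ?_
    rw [abs_mul, abs_mul, abs_of_nonneg hc0]
    have := ctr_abs M h s a s'
    apply mul_le_mul _ this (abs_nonneg _) (abs_nonneg _)
    exact mul_le_of_le_one_right (abs_nonneg _) hc1
  have : 0 ≤ (l * c) ^ 2 * (M.H : ℝ) ^ 2 / 2 := by positivity
  linarith

lemma fac_meas (M : MDP S A) (l : ℝ) (h : ℕ) (s : S) (a : A) (s' : S) :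
    Measurable fun c => fac M l h s a c s' := by
  unfold fac; fun_prop

lemma fac_meas2 {m : MeasurableSpace Ω} (M : MDP S A) (l : ℝ) (h : ℕ) (s : S) (a : A)
    (c : Ω → ℝ) (Y : Ω → S) (hc : Measurable c) (hY : Measurable Y) :
    Measurable fun ω => fac M l h s a (c ω) (Y ω) := by
  unfold fac
  have : Measurable fun ω => ctr M h s a (Y ω) := (Measurable.of_discrete (f := ctr M h s a)).comp hY
  fun_prop

lemma Zp_meas {m : MeasurableSpace Ω} (M : MDP S A) (l : ℝ) (h : ℕ) (s : S) (a : A) (N : ℕ)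
    (st : ℕ → ℕ → Ω → S) (ac : ℕ → ℕ → Ω → A) (k : ℕ)
    (hx : ∀ j ∈ Icc 1 k, Measurable (st j h)) (hy : ∀ j ∈ Icc 1 k, Measurable (ac j h))
    (hY : ∀ j ∈ Icc 1 k, Measurable (st j (h + 1))) :
    Measurable (Zp M l h s a N st ac k) := by
  unfold Zp
  refine Finset.measurable_fun_prod _ fun j hj => ?_
  have hj' := mem_Icc.mp hj
  refine fac_meas2 M l h s a _ _ ?_ (hY j hj)
  apply cf_meas M.H N (fun j => st j h) (fun j => ac j h) s a j hj'.1
  · exact fun i hi => hx i (by simp only [mem_Icc] at hi ⊢; omega)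
  · exact fun i hi => hy i (by simp only [mem_Icc] at hi ⊢; omega)

lemma Zp_bd (M : MDP S A) (l : ℝ) (h : ℕ) (s : S) (a : A) (N : ℕ)
    (st : ℕ → ℕ → Ω → S) (ac : ℕ → ℕ → Ω → A) (k : ℕ) (ω : Ω) :
    0 ≤ Zp M l h s a N st ac k ω ∧ Zp M l h s a N st ac k ω ≤ Real.exp (|l| * M.H) ^ k := by
  unfold Zp
  refine ⟨Finset.prod_nonneg fun j _ => (fac_pos _ _ _ _ _ _ _).le, ?_⟩
  calc _ ≤ ∏ j ∈ Icc 1 k, Real.exp (|l| * M.H) := by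
        refine Finset.prod_le_prod (fun j _ => (fac_pos _ _ _ _ _ _ _).le) fun j _ => ?_
        exact fac_le _ _ _ _ _ _ _ (cf_mem _ _ _ _ _ _ _).1 (cf_mem _ _ _ _ _ _ _).2
    _ = _ := by simp

lemma Zp_integral {m0 : MeasurableSpace Ω} (μ : Measure Ω) [IsProbabilityMeasure μ]
    (M : MDP S A) (K : ℕ) (𝓕 : Filtration ℕ m0)
    (st : ℕ → ℕ → Ω → S) (ac : ℕ → ℕ → Ω → A) (htr : IsMDPTrajectory μ M K 𝓕 st ac)
    (l : ℝ) (h : ℕ) (hh : h ∈ Icc 1 M.H) (s : S) (a : A) (N : ℕ) (k : ℕ) (hk : k ≤ K) :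
    ∫ ω, Zp M l h s a N st ac k ω ∂μ ≤ 1 := by
  obtain ⟨hst, hac, hP⟩ := htr
  obtain ⟨hh1, hh2⟩ := mem_Icc.mp hh
  have htime : ∀ i j, 1 ≤ i → i < j → (i - 1) * M.H + (h + 1) ≤ (j - 1) * M.H + h := by
    intro i j hi hij
    obtain ⟨i, rfl⟩ : ∃ i', i = i' + 1 := ⟨i - 1, by omega⟩
    obtain ⟨j, rfl⟩ : ∃ j', j = j' + 1 := ⟨j - 1, by omega⟩
    simp only [Nat.add_sub_cancel]
    have := Nat.mul_le_mul_right M.H (show i + 1 ≤ j by omega)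
    have := M.H_pos
    nlinarith
  have htime' : ∀ i j, i ≤ j → (i - 1) * M.H + h ≤ (j - 1) * M.H + h := by
    intro i j hij
    have := Nat.mul_le_mul_right M.H (show i - 1 ≤ j - 1 by omega)
    omega
  induction k with
  | zero => simp [Zp]
  | succ k ih =>
    refine le_trans ?_ (ih (by omega))
    have hk1 : k + 1 ∈ Icc 1 K := by simp; omega
    have mst : ∀ j ∈ Icc 1 (k + 1), Measurable[𝓕 ((k + 1 - 1) * M.H + h)] (st j h) := by
      intro j hj
      have hj := mem_Icc.mp hj
      exact (hst j (by simp; omega) h (by simp; omega)).mono (𝓕.mono (htime' j (k + 1) hj.2)) le_rfl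
    have mac : ∀ j ∈ Icc 1 (k + 1), Measurable[𝓕 ((k + 1 - 1) * M.H + h)] (ac j h) := by
      intro j hj
      have hj := mem_Icc.mp hj
      exact (hac j (by simp; omega) h (by simp; omega)).mono (𝓕.mono (htime' j (k + 1) hj.2)) le_rfl
    have mY : ∀ j ∈ Icc 1 k, Measurable[𝓕 ((k + 1 - 1) * M.H + h)] (st j (h + 1)) := by
      intro j hj
      have hj := mem_Icc.mp hj
      exact (hst j (by simp; omega) (h + 1) (by simp; omega)).mono
        (𝓕.mono (htime j (k + 1) hj.1 (by omega))) le_rfl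
    have hsub : ∀ j ∈ Icc 1 k, j ∈ Icc 1 (k + 1) := fun j hj => by
      simp only [mem_Icc] at hj ⊢; omega
    have mc := cf_meas (m := 𝓕 ((k + 1 - 1) * M.H + h)) M.H N (fun j => st j h) (fun j => ac j h)
      s a (k + 1) (by omega) mst mac
    have hmain := cond_step μ (𝓕 ((k + 1 - 1) * M.H + h)) (𝓕.le _)
      (Zp M l h s a N st ac k)
      (Zp_meas (m := 𝓕 ((k + 1 - 1) * M.H + h)) M l h s a N st ac k
        (fun j hj => mst j (hsub j hj)) (fun j hj => mac j (hsub j hj)) mY)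
      (fun ω => (Zp_bd M l h s a N st ac k ω).1) _ (fun ω => (Zp_bd M l h s a N st ac k ω).2)
      (st (k + 1) (h + 1))
      (fun s' => by
        have := (hst (k + 1) hk1 (h + 1) (by simp; omega)).mono (𝓕.le _) le_rfl
        exact this (measurableSet_singleton s'))
      (fun ω s' => M.P h (st (k + 1) h ω) (ac (k + 1) h ω) s')
      (hP (k + 1) hk1 h hh)
      (fun s' ω => fac M l h s a
        (cf M.H N (fun j => st j h ω) (fun j => ac j h ω) s a (k + 1)) s')
      (fun s' => (fac_meas M l h s a s').comp mc)
      (Real.exp (|l| * M.H))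
      (fun s' ω => by
        rw [abs_of_pos (fac_pos _ _ _ _ _ _ _)]
        exact fac_le _ _ _ _ _ _ _ (cf_mem _ _ _ _ _ _ _).1 (cf_mem _ _ _ _ _ _ _).2)
      (fun ω => by
        by_cases hv : s = st (k + 1) h ω ∧ a = ac (k + 1) h ω
        · rw [← hv.1, ← hv.2]
          refine hoeffding_fin (M.P h s a) (ctr M h s a) M.H _ ?_ (M.P_nonneg h s a)
            (M.P_sum_one h s a) (ctr_abs M h s a) (ctr_mean M h s a)
          exact_mod_cast M.H_pos
        · have : cf M.H N (fun j => st j h ω) (fun j => ac j h ω) s a (k + 1) = 0 := by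
            rw [cf, if_neg hv]
          simp only [this, fac]
          simp [M.P_sum_one])
    refine le_trans (le_of_eq ?_) hmain
    congr 1; ext ω
    unfold Zp
    rw [Finset.prod_Icc_succ_top (by omega)]

lemma Zp_eq_exp (M : MDP S A) (l : ℝ) (h : ℕ) (s : S) (a : A) (N : ℕ)
    (st : ℕ → ℕ → Ω → S) (ac : ℕ → ℕ → Ω → A) (k : ℕ) (ω : Ω) :
    Zp M l h s a N st ac k ω = Real.exp
      (l * (∑ j ∈ Icc 1 k, cf M.H N (fun j => st j h ω) (fun j => ac j h ω) s a j
          * ctr M h s a (st j (h + 1) ω))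
        - l ^ 2 * (M.H : ℝ) ^ 2 / 2 *
          ∑ j ∈ Icc 1 k, (cf M.H N (fun j => st j h ω) (fun j => ac j h ω) s a j) ^ 2) := by
  unfold Zp fac
  rw [← Real.exp_sum, Finset.mul_sum, Finset.mul_sum, ← Finset.sum_sub_distrib]
  congr 1
  refine Finset.sum_congr rfl fun j _ => ?_
  ring

/-- if the exponential supermartingale is small, the deviation bound holds. -/
lemma dev_of_Zp (M : MDP S A) (cb ι : ℝ) (hcb : 2 ≤ cb) (hι : 0 < ι) (h : ℕ) (s : S) (a : A)
    (N : ℕ) (hN : 1 ≤ N)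
    (st : ℕ → ℕ → Ω → S) (ac : ℕ → ℕ → Ω → A) (k : ℕ) (ω : Ω)
    (hZ : Zp M (bon cb M.H ι N * N / (2 * (M.H : ℝ) ^ 3)) h s a N st ac k ω < Real.exp ι) :
    ∑ j ∈ Icc 1 k, cf M.H N (fun j => st j h ω) (fun j => ac j h ω) s a j
      * ctr M h s a (st j (h + 1) ω) ≤ bon cb M.H ι N := by
  have hH : (1 : ℝ) ≤ M.H := by exact_mod_cast M.H_pos
  have hN' : (1 : ℝ) ≤ N := by exact_mod_cast hN
  by_contra hcon
  push Not at hcon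
  rw [Zp_eq_exp, Real.exp_lt_exp] at hZ
  have hv := sum_cf_sq_le M.H N M.H_pos hN (fun j => st j h ω) (fun j => ac j h ω) s a k
  set X := ∑ j ∈ Icc 1 k, cf M.H N (fun j => st j h ω) (fun j => ac j h ω) s a j
      * ctr M h s a (st j (h + 1) ω)
  set W := ∑ j ∈ Icc 1 k, (cf M.H N (fun j => st j h ω) (fun j => ac j h ω) s a j) ^ 2
  set b := bon cb M.H ι N with hb
  have hb2 : b ^ 2 = cb ^ 2 * ((M.H : ℝ) ^ 3 * ι / N) := by
    rw [hb, bon, mul_pow, Real.sq_sqrt (by positivity)]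
  have hb0 : 0 ≤ b := by
    rw [hb, bon]; exact mul_nonneg (by linarith) (Real.sqrt_nonneg _)
  set l := b * N / (2 * (M.H : ℝ) ^ 3) with hl
  have hl0 : 0 ≤ l := by positivity
  have i1 : l * b ≤ l * X := mul_le_mul_of_nonneg_left hcon.le hl0
  have i2 : l ^ 2 * (M.H : ℝ) ^ 2 / 2 * W ≤ l ^ 2 * (M.H : ℝ) ^ 2 / 2 * (2 * M.H / N) :=
    mul_le_mul_of_nonneg_left hv (by positivity)
  have i3 : l * b - l ^ 2 * (M.H : ℝ) ^ 2 / 2 * (2 * M.H / N) = cb ^ 2 * ι / 4 := by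
    have e1 : l * b - l ^ 2 * (M.H : ℝ) ^ 2 / 2 * (2 * M.H / N)
        = b ^ 2 * (N / (4 * (M.H : ℝ) ^ 3)) := by
      rw [hl]; field_simp; ring
    rw [e1, hb2]; field_simp
  have i4 : ι ≤ cb ^ 2 * ι / 4 := by nlinarith [mul_nonneg (mul_nonneg (sub_nonneg.mpr hcb) (sub_nonneg.mpr hcb)) hι.le, mul_nonneg (sub_nonneg.mpr hcb) hι.le]
  linarith

end prob2

end PessAux

/-- **Pessimism of the LCB iterates** (Lemma 3, eq. (33) of the paper).
There is a universal constant `c₀ > 0` such that for any MDP, any `δ ∈ (0,1)` and any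
bonus constant `cb ≥ c₀`, with probability at least `1 - δ` over the trajectories,
`Q_h^{LCB,k}(s,a) ≤ Q_h^⋆(s,a)` and `V_h^{LCB,k}(s) ≤ V_h^⋆(s)` simultaneously
for all `(s,a,k,h) ∈ S × A × [K] × [H]`. -/
theorem pessimism_of_QEarlySettledAdvantage :
    ∃ c₀ : ℝ, 0 < c₀ ∧
      ∀ (S A : Type) [Fintype S] [Fintype A] [Nonempty S] [Nonempty A]
        [DecidableEq S] [DecidableEq A]
        [MeasurableSpace S] [MeasurableSingletonClass S]
        [MeasurableSpace A] [MeasurableSingletonClass A]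
        (M : MDP S A) (K : ℕ) (cb δ : ℝ)
        (Ω : Type) (m0 : MeasurableSpace Ω) (μ : Measure Ω)
        (𝓕 : Filtration ℕ m0) (alg : Ω → QLAlg M K cb δ),
        IsProbabilityMeasure μ → 0 < δ → δ < 1 → 1 ≤ K → c₀ ≤ cb →
        IsMDPTrajectory μ M K 𝓕 (fun k h ω => (alg ω).st k h)
          (fun k h ω => (alg ω).ac k h) →
        1 - δ ≤ (μ {ω | ∀ s a, ∀ k ∈ Icc 1 K, ∀ h ∈ Icc 1 M.H,
            (alg ω).QLCB k h s a ≤ M.Qstar h s a ∧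
              (alg ω).VLCB k h s ≤ M.Vstar h s}).toReal := by
  refine ⟨2, by norm_num, ?_⟩
  intro S A _ _ _ _ _ _ _ _ _ _ M K cb δ Ω m0 μ 𝓕 alg hμ hδ0 hδ1 hK hcb htr
  set st : ℕ → ℕ → Ω → S := fun k h ω => (alg ω).st k h with hst
  set ac : ℕ → ℕ → Ω → A := fun k h ω => (alg ω).ac k h with hac
  set D : ℝ := (Fintype.card S : ℝ) * (Fintype.card A) * (K * M.H) with hD
  have hS : (1 : ℝ) ≤ Fintype.card S := by exact_mod_cast Fintype.card_pos
  have hA : (1 : ℝ) ≤ Fintype.card A := by exact_mod_cast Fintype.card_pos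
  have hK' : (1 : ℝ) ≤ K := by exact_mod_cast hK
  have hH' : (1 : ℝ) ≤ M.H := by exact_mod_cast M.H_pos
  have hD1 : 1 ≤ D := one_le_mul_of_one_le_of_one_le
    (one_le_mul_of_one_le_of_one_le hS hA) (one_le_mul_of_one_le_of_one_le hK' hH')
  have hDδ : 1 < D / δ := by rw [lt_div_iff₀ hδ0]; linarith
  have hι : 0 < iota S A K M.H δ := Real.log_pos hDδ
  have hexp : Real.exp (iota S A K M.H δ) = D / δ := Real.exp_log (by linarith)
  let l : ℕ → ℝ := fun N => PessAux.bon cb M.H (iota S A K M.H δ) N * N / (2 * (M.H : ℝ) ^ 3)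
  let E : (S × A) × (ℕ × ℕ) → Set Ω := fun q =>
    {ω | Real.exp (iota S A K M.H δ) ≤
      PessAux.Zp M (l q.2.2) q.2.1 q.1.1 q.1.2 q.2.2 st ac K ω}
  let I : Finset ((S × A) × (ℕ × ℕ)) := Finset.univ ×ˢ (Icc 1 M.H ×ˢ Icc 1 K)
  have hmeas : ∀ q ∈ I, Measurable
      (PessAux.Zp M (l q.2.2) q.2.1 q.1.1 q.1.2 q.2.2 st ac K) := by
    intro q hq
    simp only [I, mem_product, mem_univ, true_and, mem_Icc] at hq
    apply PessAux.Zp_meas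
    · exact fun j hj => (htr.1 j hj q.2.1 (by simp; omega)).mono (𝓕.le _) le_rfl
    · exact fun j hj => (htr.2.1 j hj q.2.1 (by simp; omega)).mono (𝓕.le _) le_rfl
    · exact fun j hj => (htr.1 j hj (q.2.1 + 1) (by simp; omega)).mono (𝓕.le _) le_rfl
  have hEm : ∀ q ∈ I, MeasurableSet (E q) := fun q hq =>
    measurableSet_le measurable_const (hmeas q hq)
  have hEp : ∀ q ∈ I, μ.real (E q) ≤ δ / D := by
    intro q hq
    have hq' := hq
    simp only [I, mem_product, mem_univ, true_and] at hq'
    have h1 := PessAux.Zp_integral μ M K 𝓕 st ac htr (l q.2.2) q.2.1 hq'.1 q.1.1 q.1.2 q.2.2 K le_rfl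
    have hint : Integrable (PessAux.Zp M (l q.2.2) q.2.1 q.1.1 q.1.2 q.2.2 st ac K) μ := by
      refine Integrable.of_bound (hmeas q hq).aestronglyMeasurable
        (Real.exp (|l q.2.2| * M.H) ^ K) (Filter.Eventually.of_forall fun ω => ?_)
      have hb := PessAux.Zp_bd M (l q.2.2) q.2.1 q.1.1 q.1.2 q.2.2 st ac K ω
      rw [Real.norm_eq_abs, abs_of_nonneg hb.1]; exact hb.2
    have h2 := mul_meas_ge_le_integral_of_nonneg (μ := μ)
      (Filter.Eventually.of_forall fun ω =>
        (PessAux.Zp_bd M (l q.2.2) q.2.1 q.1.1 q.1.2 q.2.2 st ac K ω).1) hint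
      (Real.exp (iota S A K M.H δ))
    have h3 : Real.exp (iota S A K M.H δ) * μ.real (E q) ≤ 1 := h2.trans h1
    rw [hexp] at h3
    have hDp : 0 < D := by linarith
    rw [le_div_iff₀ hDp]
    calc μ.real (E q) * D = δ * (D / δ * μ.real (E q)) := by field_simp
      _ ≤ δ * 1 := mul_le_mul_of_nonneg_left h3 hδ0.le
      _ = δ := mul_one δ
  have hUm : MeasurableSet (⋃ q ∈ I, E q) := Finset.measurableSet_biUnion _ hEm
  have hU : μ.real (⋃ q ∈ I, E q) ≤ δ := by
    calc μ.real (⋃ q ∈ I, E q) ≤ ∑ q ∈ I, μ.real (E q) := measureReal_biUnion_finset_le _ _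
      _ ≤ ∑ q ∈ I, δ / D := Finset.sum_le_sum hEp
      _ = D * (δ / D) := by
          rw [Finset.sum_const, nsmul_eq_mul]
          congr 1
          simp only [I, Finset.card_product, Finset.card_univ, Fintype.card_prod, Nat.card_Icc,
            Nat.add_sub_cancel, hD]
          push_cast; ring
      _ = δ := by field_simp
  have hcompl : 1 - δ ≤ μ.real (⋃ q ∈ I, E q)ᶜ := by
    rw [probReal_compl_eq_one_sub hUm]; linarith
  refine hcompl.trans ?_
  refine measureReal_mono ?_
  intro ω hω
  refine PessAux.det_main (alg ω) (by linarith) hι.le ?_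
  intro s a h hh N hN
  refine PessAux.dev_of_Zp M cb _ hcb hι h s a N (mem_Icc.mp hN).1 st ac K ω ?_
  by_contra hcon
  push Not at hcon
  apply hω
  have hqI : ((s, a), (h, N)) ∈ I := by
    simp only [I, mem_product, mem_univ, true_and]; exact ⟨hh, hN⟩
  exact Set.mem_biUnion (t := E) hqI hcon
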